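/- Let W be a 6-dimensional vector space over a field k of characteristic zero with basis x₁,…,x₆, and set φ₁ = x₁∧x₂ + x₃∧x₄, φ₂ = x₁∧x₅ + x₂∧x₃ + x₄∧x₆. Then (αφ₁ + φ₂)∧(αφ₁ + φ₂)∧(αφ₁ + φ₂) ≠ 0 for every α ∈ k; i.e., every bivector on the affine line φ₂ + kφ₁ has rank 6, while φ₁ has rank 4. -/

import Mathlib

open ExteriorAlgebra

/-- A product of the images of distinct standard basis vectors, over all of them in some order,
does not vanish in the exterior algebra. -/
theorem ExteriorAlgebra.ιMulti_single_perm_ne_zero {k : Type*} [CommRing k] [Nontrivial k] {n : ℕ}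
    {f : Fin n → Fin n} (hf : Function.Injective f) :
    ιMulti k n (fun i => (Pi.single (f i) 1 : Fin n → k)) ≠ 0 := by
  intro h
  let σ : Equiv.Perm (Fin n) := Equiv.ofBijective f (Finite.injective_iff_bijective.mp hf)
  have h₁ : ιMulti k n (fun i => (Pi.single i 1 : Fin n → k)) = 0 := by
    have h₂ := (ιMulti k n).map_perm (fun i => (Pi.single i 1 : Fin n → k)) σ
    rw [show (fun i => (Pi.single i 1 : Fin n → k)) ∘ σ = fun i => Pi.single (f i) 1 from rfl,
      h] at h₂
    exact (smul_eq_zero_iff_eq _).mp h₂.symm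
  have h₃ := congrArg (liftAlternating (R := k)
    (Pi.single n (Matrix.detRowAlternating : (Fin n → k) [⋀^Fin n]→ₗ[k] k))) h₁
  rw [liftAlternating_apply_ιMulti, Pi.single_eq_same, map_zero] at h₃
  have h₄ : (fun i => (Pi.single i 1 : Fin n → k)) = (1 : Matrix (Fin n) (Fin n) k) := by
    ext i j
    simp [Matrix.one_apply, Pi.single_apply, eq_comm]
  rw [h₄] at h₃
  exact one_ne_zero (Matrix.det_one.symm.trans h₃)

/-- A decomposable bivector commutes with every vector. -/
theorem ExteriorAlgebra.commute_ι_mul_ι_ι {k M : Type*} [CommRing k] [AddCommGroup M] [Module k M]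
    (a b c : M) : Commute (ι k a * ι k b) (ι k c) := by
  have h (x y : M) : ι k x * ι k y = -(ι k y * ι k x) :=
    eq_neg_of_add_eq_zero_left (ι_add_mul_swap x y)
  rw [Commute, SemiconjBy, mul_assoc, h b c, mul_neg, ← mul_assoc, h a c, neg_mul, neg_neg,
    mul_assoc]

/-- Decomposable bivectors commute. -/
theorem ExteriorAlgebra.commute_ι_mul_ι {k M : Type*} [CommRing k] [AddCommGroup M] [Module k M]
    (a b c d : M) : Commute (ι k a * ι k b) (ι k c * ι k d) :=
  (commute_ι_mul_ι_ι a b c).mul_right (commute_ι_mul_ι_ι a b d)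

/-- Decomposable bivectors with the same first factor have zero product. -/
theorem ExteriorAlgebra.ι_mul_ι_mul_left {k M : Type*} [CommRing k] [AddCommGroup M] [Module k M]
    (a b c : M) : (ι k a * ι k b) * (ι k a * ι k c) = 0 := by
  rw [← mul_assoc, (commute_ι_mul_ι_ι a b a).eq, ← mul_assoc, ι_sq_zero, zero_mul, zero_mul]

/-- Decomposable bivectors such that the second factor of one is the first factor of the other
have zero product. -/
theorem ExteriorAlgebra.ι_mul_ι_mul_cons {k M : Type*} [CommRing k] [AddCommGroup M] [Module k M]
    (a b c : M) : (ι k a * ι k b) * (ι k b * ι k c) = 0 := by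
  rw [mul_assoc, ← mul_assoc (ι k b), ι_sq_zero, zero_mul, mul_zero]

/-- If `A`, …, `E` satisfy the quadratic relations of the bivectors `x₁∧x₂`, `x₃∧x₄`, `x₁∧x₅`, `x₂∧x₃`,
`x₄∧x₆`, then only the last three contribute to the cube. -/
theorem cube_eq_of_commute {k R : Type*} [CommRing k] [Ring R] [Algebra k R] {A B C D E : R}
    (hBA : B * A = A * B) (hCA : C * A = 0) (hDA : D * A = 0) (hEA : E * A = A * E)
    (hCB : C * B = B * C) (hDB : D * B = 0) (hEB : E * B = 0)
    (hDC : D * C = C * D) (hEC : E * C = C * E) (hED : E * D = D * E)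
    (hAA : A * A = 0) (hBB : B * B = 0) (hCC : C * C = 0) (hDD : D * D = 0) (hEE : E * E = 0)
    (hAC : A * C = 0) (hAD : A * D = 0) (hBD : B * D = 0) (hBE : B * E = 0) (α : k) :
    (α • (A + B) + (C + D + E)) * (α • (A + B) + (C + D + E)) * (α • (A + B) + (C + D + E)) =
      (6 : k) • (C * D * E) := by
  have h₁ : (α • (A + B) + (C + D + E)) * (α • (A + B) + (C + D + E)) =
      (2 * α ^ 2) • (A * B) + (2 * α) • (A * E) + (2 * α) • (B * C) +
        (2 : k) • (C * D) + (2 : k) • (C * E) + (2 : k) • (D * E) := by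
    simp only [mul_add, add_mul, smul_add, smul_mul_assoc, mul_smul_comm, hBA, hCA, hDA, hEA, hCB,
      hDB, hEB, hDC, hEC, hED, hAA, hBB, hCC, hDD, hEE, hAC, hAD, hBD, hBE, smul_zero]
    module
  have z (x y : R) (h : x * y = 0) (w : R) : w * x * y = 0 := by rw [mul_assoc, h, mul_zero]
  have s (x y w : R) (h : x * y = y * x) : w * x * y = w * y * x := by
    rw [mul_assoc, h, mul_assoc]
  have hABC : A * B * C = 0 := by rw [← s _ _ _ hCB, hAC, zero_mul]
  have hBCD : B * C * D = 0 := by rw [← s _ _ _ hDC, hBD, zero_mul]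
  have hBCE : B * C * E = 0 := by rw [← s _ _ _ hEC, hBE, zero_mul]
  rw [h₁]
  simp only [mul_add, add_mul, smul_add, smul_mul_assoc, mul_smul_comm,
    s _ _ _ hBA, z _ _ hCA, z _ _ hDA, s _ _ _ hEA, s _ _ _ hCB,
    z _ _ hDB, z _ _ hEB, s _ _ _ hDC, s _ _ _ hEC, s _ _ _ hED, z _ _ hBB, z _ _ hCC,
    z _ _ hDD, z _ _ hEE, z _ _ hBD, z _ _ hBE, hAA, hCC, hDD, hBB, hCA, hDA, hDC,
    hAC, hAD, hABC, hBCD, hBCE, zero_mul, smul_zero]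
  module

/-- For `φ₁ = x₁∧x₂ + x₃∧x₄` and `φ₂ = x₁∧x₅ + x₂∧x₃ + x₄∧x₆` (dim W = 6), every
bivector on the affine line `φ₂ + kφ₁` has rank 6 (nonvanishing cube), while `φ₁` has
rank 4 (vanishing cube but nonvanishing square). -/
theorem affine_line_rank_six
    {k : Type*} [Field k] [CharZero k] :
    let e : Fin 6 → (Fin 6 → k) := fun i => Pi.single i 1
    let φ₁ : ExteriorAlgebra k (Fin 6 → k) := ι k (e 0) * ι k (e 1) + ι k (e 2) * ι k (e 3)
    let φ₂ : ExteriorAlgebra k (Fin 6 → k) :=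
      ι k (e 0) * ι k (e 4) + ι k (e 1) * ι k (e 2) + ι k (e 3) * ι k (e 5)
    (∀ α : k, (α • φ₁ + φ₂) * (α • φ₁ + φ₂) * (α • φ₁ + φ₂) ≠ 0) ∧
      φ₁ * φ₁ * φ₁ = 0 ∧ φ₁ * φ₁ ≠ 0 := by
  intro e φ₁ φ₂
  have hAA := ι_mul_ι_mul_left (k := k) (e 0) (e 1) (e 1)
  have hBB := ι_mul_ι_mul_left (k := k) (e 2) (e 3) (e 3)
  have hBA := (commute_ι_mul_ι (k := k) (e 2) (e 3) (e 0) (e 1)).eq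
  have hsq : φ₁ * φ₁ = (2 : k) • (ι k (e 0) * ι k (e 1) * (ι k (e 2) * ι k (e 3))) := by
    simp only [φ₁, mul_add, add_mul, hAA, hBB, hBA]
    module
  refine ⟨fun α => ?_, ?_, fun h => ?_⟩
  · have hAD := ι_mul_ι_mul_cons (k := k) (e 0) (e 1) (e 2)
    have hDB := ι_mul_ι_mul_cons (k := k) (e 1) (e 2) (e 3)
    have hBE := ι_mul_ι_mul_cons (k := k) (e 2) (e 3) (e 5)
    rw [cube_eq_of_commute hBA (ι_mul_ι_mul_left _ _ _)
      ((commute_ι_mul_ι _ _ _ _).eq.trans hAD) (commute_ι_mul_ι _ _ _ _).eq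
      (commute_ι_mul_ι _ _ _ _).eq hDB ((commute_ι_mul_ι _ _ _ _).eq.trans hBE)
      (commute_ι_mul_ι _ _ _ _).eq (commute_ι_mul_ι _ _ _ _).eq (commute_ι_mul_ι _ _ _ _).eq
      hAA hBB (ι_mul_ι_mul_left _ _ _) (ι_mul_ι_mul_left _ _ _) (ι_mul_ι_mul_left _ _ _)
      (ι_mul_ι_mul_left _ _ _) hAD ((commute_ι_mul_ι _ _ _ _).eq.trans hDB) hBE]
    refine smul_ne_zero (by norm_num) fun h => ?_
    refine ιMulti_single_perm_ne_zero (k := k) (f := ![0, 4, 1, 2, 3, 5]) (by decide) ?_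
    rw [← h, ιMulti_apply]
    simp [List.ofFn_succ, mul_assoc, e]
  · rw [hsq, smul_mul_assoc, mul_add, mul_assoc (ι k (e 0) * ι k (e 1)), hBA,
      ← mul_assoc (ι k (e 0) * ι k (e 1)), hAA, zero_mul,
      mul_assoc (ι k (e 0) * ι k (e 1)), hBB, mul_zero, add_zero, smul_zero]
  · rw [hsq] at h
    have h₁ := (smul_eq_zero_iff_right (two_ne_zero (α := k))).mp h
    refine ιMulti_single_perm_ne_zero (k := k) (n := 6) (f := id) Function.injective_id ?_
    rw [← zero_mul (ι k (e 4) * ι k (e 5)), ← h₁, ιMulti_apply]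
    simp [List.ofFn_succ, mul_assoc, e]
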